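/- arXiv:1510.03267 — 2 statements merged into one kernel-verified Lean document; each statement's English description precedes it below -/
import Mathlib

section
/- Let L be a convex and separately Lipschitz continuous pairwise loss function, H the RKHS of a bounded measurable kernel k over X, and P any Borel probability measure on X×Y. Then for every λ > 0 there exists a unique minimizer f_{L★,P,λ} ∈ H of the regularized shifted risk f ↦ R_{L★,P}(f) + λ‖f‖_H². (No moment condition such as R_{L,P}(0) < ∞ is required.) -/
open MeasureTheory
open scoped RealInnerProductSpace

/-- The shifted risk `R_{L★,P}(f)` of the function `x ↦ ⟪f, Φ x⟫` induced by `f ∈ H`. -/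
noncomputable def shiftedRisk {X : Type*} [MeasurableSpace X] {Y : Set ℝ}
    {H : Type*} [NormedAddCommGroup H] [InnerProductSpace ℝ H]
    (L : X → Y → X → Y → ℝ → ℝ → ℝ) (Φ : X → H)
    (P : Measure (X × Y)) (f : H) : ℝ :=
  ∫ z : (X × Y) × (X × Y),
    (L z.1.1 z.1.2 z.2.1 z.2.2 ⟪f, Φ z.1.1⟫ ⟪f, Φ z.2.1⟫
      - L z.1.1 z.1.2 z.2.1 z.2.2 0 0) ∂(P.prod P)

theorem aux_min {H : Type*} [NormedAddCommGroup H] [InnerProductSpace ℝ H] [CompleteSpace H]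
    (R : H → ℝ) (C : ℝ) (hR : ∀ f g, |R f - R g| ≤ C * ‖f - g‖)
    (hc : ∀ f g, R ((1/2 : ℝ) • f + (1/2 : ℝ) • g) ≤ (1/2) * R f + (1/2) * R g)
    (l : ℝ) (hl : 0 < l) :
    ∃! u : H, ∀ g : H, R u + l * ‖u‖ ^ 2 ≤ R g + l * ‖g‖ ^ 2 := by
  have hRc : Continuous R := by
    have : LipschitzWith (Real.toNNReal C) R := by
      apply LipschitzWith.of_dist_le_mul
      intro f g
      rw [Real.dist_eq, dist_eq_norm]
      exact (hR f g).trans (mul_le_mul_of_nonneg_right (Real.le_coe_toNNReal C) (norm_nonneg _))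
    exact this.continuous
  set J : H → ℝ := fun f => R f + l * ‖f‖ ^ 2 with hJ
  have hJc : Continuous J := by fun_prop
  have key : ∀ f g, l / 4 * ‖f - g‖ ^ 2 ≤
      (1/2) * J f + (1/2) * J g - J ((1/2 : ℝ) • f + (1/2 : ℝ) • g) := by
    intro f g
    have h1 := hc f g
    have h2 := parallelogram_law_with_norm ℝ f g
    have h3 : ‖(1/2 : ℝ) • f + (1/2 : ℝ) • g‖ = (1/2) * ‖f + g‖ := by
      rw [← smul_add, norm_smul]; norm_num
    simp only [hJ, h3]
    have h4 : l * (‖f + g‖ ^ 2 + ‖f - g‖ ^ 2)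
      = l * (2 * (‖f‖ ^ 2 + ‖g‖ ^ 2)) := by rw [h2]
    nlinarith
  have hbdd : BddBelow (Set.range J) := by
    refine ⟨R 0 - C ^ 2 / (4 * l), ?_⟩
    rintro _ ⟨f, rfl⟩
    have h1 := (abs_le.1 (hR f 0)).1
    rw [sub_zero] at h1
    have h2 : 0 ≤ l * (‖f‖ - C / (2 * l)) ^ 2 := by positivity
    have h3 : l * (‖f‖ - C / (2 * l)) ^ 2 = l * ‖f‖ ^ 2 - C * ‖f‖ + C ^ 2 / (4 * l) := by
      field_simp; ring
    simp only [hJ]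
    linarith
  set m := ⨅ f, J f with hm
  have hmle : ∀ f, m ≤ J f := fun f => ciInf_le hbdd f
  have hex : ∀ n : ℕ, ∃ f, J f < m + 1 / ((n : ℝ) + 1) := fun n =>
    exists_lt_of_ciInf_lt (by rw [← hm]; have : 0 < 1 / ((n : ℝ) + 1) := by positivity
                              linarith)
  choose u hu using hex
  have hlim := tendsto_one_div_add_atTop_nhds_zero_nat (𝕜 := ℝ)
  have hcau : CauchySeq u := by
    apply cauchySeq_of_le_tendsto_0 (fun n : ℕ => √(4 / l * (1 / ((n : ℝ) + 1))))
    · intro n k N hn hk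
      rw [dist_eq_norm]
      apply Real.le_sqrt_of_sq_le
      have h1 := key (u n) (u k)
      have h2 := hmle ((1/2 : ℝ) • u n + (1/2 : ℝ) • u k)
      have h3 : 1 / ((n : ℝ) + 1) ≤ 1 / ((N : ℝ) + 1) := by gcongr
      have h4 : 1 / ((k : ℝ) + 1) ≤ 1 / ((N : ℝ) + 1) := by gcongr
      have h5 : l / 4 * ‖u n - u k‖ ^ 2 ≤ 1 / ((N : ℝ) + 1) := by
        linarith [hu n, hu k]
      calc ‖u n - u k‖ ^ 2 = 4 / l * (l / 4 * ‖u n - u k‖ ^ 2) := by field_simp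
        _ ≤ _ := by gcongr
    · have := (hlim.const_mul (4 / l)).sqrt
      simpa using this
  obtain ⟨v, hv⟩ := cauchySeq_tendsto_of_complete hcau
  have hvm : J v ≤ m := by
    refine le_of_tendsto_of_tendsto' ((hJc.tendsto v).comp hv) (?_ : Filter.Tendsto (fun n : ℕ => m + 1 / ((n : ℝ) + 1)) _ (nhds m)) (fun n => (hu n).le)
    simpa using hlim.const_add m
  refine ⟨v, fun g => hvm.trans (hmle g), ?_⟩
  intro w hw
  have h1 := key w v
  have h2 : J w ≤ J v := hw v
  have h3 := hmle ((1/2 : ℝ) • w + (1/2 : ℝ) • v)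
  have h4 : l / 4 * ‖w - v‖ ^ 2 ≤ 0 := by linarith
  have h5 : ‖w - v‖ ^ 2 ≤ 0 := by
    by_contra h
    push Not at h
    have : 0 < l / 4 * ‖w - v‖ ^ 2 := by positivity
    linarith
  have h6 : ‖w - v‖ = 0 := by
    have := sq_nonneg ‖w - v‖
    exact pow_eq_zero_iff (two_ne_zero) |>.1 (le_antisymm h5 this)
  exact sub_eq_zero.1 (norm_eq_zero.1 h6)

/-- **Existence and uniqueness for the shifted loss, without moment conditions.** If `L` is a
convex, separately Lipschitz continuous pairwise loss and `H` the RKHS of a bounded measurable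
kernel, then for every probability measure `P` on `X × Y` and every `λ > 0` there is a unique
minimizer of the regularized shifted risk `f ↦ R_{L★,P}(f) + λ‖f‖²_H` over `H`. -/
theorem rpl_shifted_exists_unique_minimizer
    {X : Type*} [MeasurableSpace X] {Y : Set ℝ} (hY : IsClosed Y)
    (L : X → Y → X → Y → ℝ → ℝ → ℝ)
    (hL_nonneg : ∀ x y x' y' t t', 0 ≤ L x y x' y' t t')
    (hL_meas : Measurable fun p : (X × Y) × (X × Y) × ℝ × ℝ =>
      L p.1.1 p.1.2 p.2.1.1 p.2.1.2 p.2.2.1 p.2.2.2)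
    (hL_convex : ∀ x y x' y',
      ConvexOn ℝ Set.univ fun t : ℝ × ℝ => L x y x' y' t.1 t.2)
    (L₁ : ℝ) (hL₁ : 0 ≤ L₁)
    (hLip : ∀ x y x' y' t₁ t₂ s₁ s₂,
      |L x y x' y' t₁ t₂ - L x y x' y' s₁ s₂| ≤ L₁ * (|t₁ - s₁| + |t₂ - s₂|))
    {H : Type*} [NormedAddCommGroup H] [InnerProductSpace ℝ H] [CompleteSpace H]
    (Φ : X → H) (κ : ℝ) (hκ : ∀ x, ‖Φ x‖ ≤ κ)
    (hΦmeas : ∀ f : H, Measurable fun x => ⟪f, Φ x⟫)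
    (P : Measure (X × Y)) [IsProbabilityMeasure P]
    (l : ℝ) (hl : 0 < l) :
    ∃! fmin : H, ∀ g : H,
      shiftedRisk L Φ P fmin + l * ‖fmin‖ ^ 2 ≤ shiftedRisk L Φ P g + l * ‖g‖ ^ 2 := by
  have hΦ : ∀ (f : H) x, |⟪f, Φ x⟫| ≤ ‖f‖ * |κ| := fun f x =>
    (abs_real_inner_le_norm _ _).trans
      (mul_le_mul_of_nonneg_left ((hκ x).trans (le_abs_self κ)) (norm_nonneg _))
  have hm : ∀ a b : (X × Y) × (X × Y) → ℝ, Measurable a → Measurable b →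
      Measurable fun z : (X × Y) × (X × Y) => L z.1.1 z.1.2 z.2.1 z.2.2 (a z) (b z) := by
    intro a b ha hb
    exact hL_meas.comp (measurable_fst.prodMk (measurable_snd.prodMk (ha.prodMk hb)))
  have hint : ∀ f : H, Integrable (fun z : (X × Y) × (X × Y) =>
      L z.1.1 z.1.2 z.2.1 z.2.2 ⟪f, Φ z.1.1⟫ ⟪f, Φ z.2.1⟫
      - L z.1.1 z.1.2 z.2.1 z.2.2 0 0) (P.prod P) := by
    intro f
    refine Integrable.of_bound (C := L₁ * (‖f‖ * |κ| + ‖f‖ * |κ|)) ?_ ?_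
    · refine Measurable.aestronglyMeasurable (Measurable.sub (hm _ _ ?_ ?_)
        (hm _ _ measurable_const measurable_const))
      · exact (hΦmeas f).comp (measurable_fst.comp measurable_fst)
      · exact (hΦmeas f).comp (measurable_fst.comp measurable_snd)
    · refine Filter.Eventually.of_forall fun z => ?_
      rw [Real.norm_eq_abs]
      refine (hLip _ _ _ _ _ _ _ _).trans (mul_le_mul_of_nonneg_left ?_ hL₁)
      rw [sub_zero, sub_zero]
      exact add_le_add (hΦ _ _) (hΦ _ _)
  refine aux_min (shiftedRisk L Φ P) (L₁ * (|κ| + |κ|)) ?_ ?_ l hl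
  · intro f g
    unfold shiftedRisk
    rw [← integral_sub (hint f) (hint g), ← Real.norm_eq_abs]
    refine (norm_integral_le_of_norm_le_const (C := L₁ * (|κ| + |κ|) * ‖f - g‖)
      (Filter.Eventually.of_forall fun z => ?_)).trans (by simp)
    rw [Real.norm_eq_abs, sub_sub_sub_cancel_right]
    refine (hLip _ _ _ _ _ _ _ _).trans ?_
    rw [← inner_sub_left, ← inner_sub_left, mul_assoc]
    refine mul_le_mul_of_nonneg_left ?_ hL₁
    linarith [hΦ (f - g) z.1.1, hΦ (f - g) z.2.1]
  · intro f g
    unfold shiftedRisk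
    rw [← integral_const_mul, ← integral_const_mul,
      ← integral_add ((hint f).const_mul _) ((hint g).const_mul _)]
    refine integral_mono (hint _) (((hint f).const_mul _).add ((hint g).const_mul _)) ?_
    intro z
    have h := (hL_convex z.1.1 z.1.2 z.2.1 z.2.2).2
      (Set.mem_univ (⟪f, Φ z.1.1⟫, ⟪f, Φ z.2.1⟫)) (Set.mem_univ (⟪g, Φ z.1.1⟫, ⟪g, Φ z.2.1⟫))
      (by norm_num : (0:ℝ) ≤ 1/2) (by norm_num : (0:ℝ) ≤ 1/2) (by norm_num)
    simp only [Prod.smul_mk, Prod.mk_add_mk, smul_eq_mul] at h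
    simp only [inner_add_left, real_inner_smul_left, Pi.add_apply]
    linarith
end

section
/- Let L be a bounded pairwise loss function with L ≤ c for some constant c ∈ (0,∞), H the RKHS of a bounded measurable kernel on X, λ > 0, and define R^reg(P) := inf_{f∈H} ( R_{L,P}(f) + λ‖f‖_H² ). Then for every Borel probability measure P on X×Y, every contaminating Borel probability measure P̄ on X×Y, and every ε ∈ (0,1), the contaminated measure P_ε := (1−ε)P + εP̄ satisfies |R^reg(P_ε) − R^reg(P)| ≤ 2c·d_TV(P̄, P)·ε·(1+ε); in particular the maximum bias over contamination neighborhoods is bounded by 2cε(1+ε), uniformly over P and P̄. -/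
open MeasureTheory
open scoped RealInnerProductSpace

/-- The regularized risk functional `R^reg(P) = inf_{f ∈ H} (R_{L,P}(f) + λ ‖f‖²_H)`, where the
function induced by `f ∈ H` is `x ↦ ⟪f, Φ x⟫`. -/
noncomputable def regRisk {X : Type*} [MeasurableSpace X] {Y : Set ℝ}
    {H : Type*} [NormedAddCommGroup H] [InnerProductSpace ℝ H]
    (L : X → Y → X → Y → ℝ → ℝ → ℝ) (Φ : X → H) (l : ℝ)
    (P : Measure (X × Y)) : ℝ :=
  ⨅ f : H, ((∫ z : (X × Y) × (X × Y),
      L z.1.1 z.1.2 z.2.1 z.2.2 ⟪f, Φ z.1.1⟫ ⟪f, Φ z.2.1⟫ ∂(P.prod P)) + l * ‖f‖ ^ 2)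

/-- The total variation distance `d_TV(P,Q) = sup_{A measurable} |P(A) - Q(A)|`. -/
noncomputable def distTV {Z : Type*} [MeasurableSpace Z] (P Q : Measure Z) : ℝ :=
  ⨆ (A : Set Z) (_ : MeasurableSet A), |(P A).toReal - (Q A).toReal|


lemma distTV_bdd {Z : Type*} [MeasurableSpace Z] (P Q : Measure Z) [IsProbabilityMeasure P]
    [IsProbabilityMeasure Q] (A : Set Z) : |(P A).toReal - (Q A).toReal| ≤ 1 := by
  have h1 : P.real A ≤ 1 := measureReal_le_one
  have h2 : Q.real A ≤ 1 := measureReal_le_one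
  have h3 : 0 ≤ P.real A := measureReal_nonneg
  have h4 : 0 ≤ Q.real A := measureReal_nonneg
  simp only [Measure.real] at *
  rw [abs_le]; constructor <;> linarith

lemma distTV_le_one {Z : Type*} [MeasurableSpace Z] (P Q : Measure Z) [IsProbabilityMeasure P]
    [IsProbabilityMeasure Q] : distTV P Q ≤ 1 :=
  Real.iSup_le (fun A => Real.iSup_le (fun _ => distTV_bdd P Q A) zero_le_one) zero_le_one

lemma le_distTV {Z : Type*} [MeasurableSpace Z] (P Q : Measure Z) [IsProbabilityMeasure P]
    [IsProbabilityMeasure Q] (A : Set Z) (hA : MeasurableSet A) :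
    |P.real A - Q.real A| ≤ distTV P Q := by
  unfold distTV
  have hb : BddAbove (Set.range fun A : Set Z =>
      ⨆ (_ : MeasurableSet A), |(P A).toReal - (Q A).toReal|) := by
    refine ⟨1, ?_⟩
    rintro _ ⟨B, rfl⟩
    exact Real.iSup_le (fun _ => distTV_bdd P Q B) zero_le_one
  refine le_trans ?_ (le_ciSup hb A)
  simp [hA, Measure.real]

lemma integrable_bdd {Z : Type*} [MeasurableSpace Z] (P : Measure Z) [IsFiniteMeasure P]
    (h : Z → ℝ) (hm : Measurable h) (c : ℝ) (h0 : ∀ z, 0 ≤ h z) (hc : ∀ z, h z ≤ c) :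
    Integrable h P :=
  Integrable.of_bound hm.aestronglyMeasurable c
    (Filter.Eventually.of_forall fun z => by rw [Real.norm_of_nonneg (h0 z)]; exact hc z)

lemma integral_diff_le {Z : Type*} [MeasurableSpace Z] (P Q : Measure Z) [IsProbabilityMeasure P]
    [IsProbabilityMeasure Q] (h : Z → ℝ) (hm : Measurable h) (c : ℝ) (hcp : 0 < c)
    (h0 : ∀ z, 0 ≤ h z) (hc : ∀ z, h z ≤ c) :
    |∫ z, h z ∂P - ∫ z, h z ∂Q| ≤ c * distTV P Q := by
  have key : ∀ (μ : Measure Z) [IsProbabilityMeasure μ],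
      IntegrableOn (fun t => μ.real {a | t ≤ h a}) (Set.Ioc 0 c) := by
    intro μ _
    have ha : Antitone (fun t => μ.real {a | t ≤ h a}) := by
      intro s t hst
      exact measureReal_mono (fun a (ha : t ≤ h a) => hst.trans ha)
    refine Integrable.of_bound ha.measurable.aestronglyMeasurable 1
      (Filter.Eventually.of_forall fun t => ?_)
    rw [Real.norm_of_nonneg measureReal_nonneg]
    exact measureReal_le_one
  rw [(integrable_bdd P h hm c h0 hc).integral_eq_integral_Ioc_meas_le
      (Filter.Eventually.of_forall h0) (Filter.Eventually.of_forall hc),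
    (integrable_bdd Q h hm c h0 hc).integral_eq_integral_Ioc_meas_le
      (Filter.Eventually.of_forall h0) (Filter.Eventually.of_forall hc),
    ← integral_sub (key P) (key Q), ← Real.norm_eq_abs]
  refine (norm_setIntegral_le_of_norm_le_const (C := distTV P Q) (by simp) ?_).trans ?_
  · intro t _
    exact le_distTV P Q _ (hm measurableSet_Ici)
  · simp [hcp.le, mul_comm]

lemma integral_bds {Z : Type*} [MeasurableSpace Z] (P : Measure Z) [IsProbabilityMeasure P]
    (h : Z → ℝ) (hm : Measurable h) (c : ℝ) (h0 : ∀ z, 0 ≤ h z) (hc : ∀ z, h z ≤ c) :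
    0 ≤ ∫ z, h z ∂P ∧ ∫ z, h z ∂P ≤ c := by
  refine ⟨integral_nonneg h0, ?_⟩
  have := integral_mono (integrable_bdd P h hm c h0 hc) (integrable_const c) hc
  simpa using this

lemma prod_left_le {Z : Type*} [MeasurableSpace Z] (P Q R : Measure Z) [IsProbabilityMeasure P]
    [IsProbabilityMeasure Q] [IsProbabilityMeasure R] (h : Z × Z → ℝ) (hm : Measurable h)
    (c : ℝ) (hcp : 0 < c) (h0 : ∀ z, 0 ≤ h z) (hc : ∀ z, h z ≤ c) :
    |∫ z, h z ∂(P.prod R) - ∫ z, h z ∂(Q.prod R)| ≤ c * distTV P Q := by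
  rw [integral_prod _ (integrable_bdd _ h hm c h0 hc),
    integral_prod _ (integrable_bdd _ h hm c h0 hc)]
  have hb := fun x => integral_bds R (fun y => h (x, y)) (by fun_prop) c
    (fun _ => h0 _) (fun _ => hc _)
  exact integral_diff_le P Q _ hm.stronglyMeasurable.integral_prod_right'.measurable c hcp
    (fun x => (hb x).1) (fun x => (hb x).2)

lemma prod_right_le {Z : Type*} [MeasurableSpace Z] (P Q R : Measure Z) [IsProbabilityMeasure P]
    [IsProbabilityMeasure Q] [IsProbabilityMeasure R] (h : Z × Z → ℝ) (hm : Measurable h)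
    (c : ℝ) (hcp : 0 < c) (h0 : ∀ z, 0 ≤ h z) (hc : ∀ z, h z ≤ c) :
    |∫ z, h z ∂(R.prod P) - ∫ z, h z ∂(R.prod Q)| ≤ c * distTV P Q := by
  rw [integral_prod_symm _ (integrable_bdd _ h hm c h0 hc),
    integral_prod_symm _ (integrable_bdd _ h hm c h0 hc)]
  have hb := fun y => integral_bds R (fun x => h (x, y)) (by fun_prop) c
    (fun _ => h0 _) (fun _ => hc _)
  exact integral_diff_le P Q _ hm.stronglyMeasurable.integral_prod_left'.measurable c hcp
    (fun x => (hb x).1) (fun x => (hb x).2)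

lemma contam_le {Z : Type*} [MeasurableSpace Z] (P Q : Measure Z) [IsProbabilityMeasure P]
    [IsProbabilityMeasure Q] (h : Z × Z → ℝ) (hm : Measurable h)
    (c : ℝ) (hcp : 0 < c) (h0 : ∀ z, 0 ≤ h z) (hc : ∀ z, h z ≤ c)
    (ε : ℝ) (hε0 : 0 < ε) (hε1 : ε < 1) :
    |∫ z, h z ∂((ENNReal.ofReal (1 - ε) • P + ENNReal.ofReal ε • Q).prod
        (ENNReal.ofReal (1 - ε) • P + ENNReal.ofReal ε • Q)) - ∫ z, h z ∂(P.prod P)|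
      ≤ 2 * c * distTV Q P * (ε * (1 + ε)) := by
  have hi : ∀ (μ ν : Measure Z) [IsProbabilityMeasure μ] [IsProbabilityMeasure ν] (a b : ℝ),
      Integrable h (ENNReal.ofReal a • ENNReal.ofReal b • μ.prod ν) := fun μ ν _ _ a b =>
    ((integrable_bdd (μ.prod ν) h hm c h0 hc).smul_measure ENNReal.ofReal_ne_top).smul_measure
      ENNReal.ofReal_ne_top
  have e1 := prod_left_le Q P P h hm c hcp h0 hc
  have e2 := prod_right_le Q P P h hm c hcp h0 hc
  have e3 := prod_right_le Q P Q h hm c hcp h0 hc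
  have hfin : ∀ a : ℝ, ∀ μ : Measure Z, [IsProbabilityMeasure μ] →
      IsFiniteMeasure (ENNReal.ofReal a • μ) := fun a μ _ =>
    Measure.smul_finite μ ENNReal.ofReal_ne_top
  have := hfin (1 - ε) P
  have := hfin ε Q
  have expand : ∫ z, h z ∂((ENNReal.ofReal (1 - ε) • P + ENNReal.ofReal ε • Q).prod
        (ENNReal.ofReal (1 - ε) • P + ENNReal.ofReal ε • Q))
      = (1 - ε) * ((1 - ε) * ∫ z, h z ∂(P.prod P)) + (1 - ε) * (ε * ∫ z, h z ∂(Q.prod P))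
        + ((1 - ε) * (ε * ∫ z, h z ∂(P.prod Q)) + ε * (ε * ∫ z, h z ∂(Q.prod Q))) := by
    have hε : 0 ≤ 1 - ε := by linarith
    rw [Measure.prod_add, Measure.add_prod, Measure.add_prod]
    simp only [Measure.prod_smul_right, Measure.prod_smul_left]
    rw [integral_add_measure ((hi _ _ _ _).add_measure (hi _ _ _ _))
      ((hi _ _ _ _).add_measure (hi _ _ _ _)), integral_add_measure (hi _ _ _ _) (hi _ _ _ _),
      integral_add_measure (hi _ _ _ _) (hi _ _ _ _)]
    simp only [integral_smul_measure, ENNReal.toReal_ofReal hε, ENNReal.toReal_ofReal hε0.le,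
      smul_eq_mul]
    ring
  rw [expand]
  generalize ∫ z, h z ∂(P.prod P) = a at *
  generalize ∫ z, h z ∂(Q.prod P) = b at *
  generalize ∫ z, h z ∂(P.prod Q) = b' at *
  generalize ∫ z, h z ∂(Q.prod Q) = d at *
  generalize distTV Q P = T at *
  rw [abs_le] at *
  have hs : 0 < ε ^ 2 := by positivity
  constructor <;> nlinarith [mul_le_mul_of_nonneg_left e1.1 hε0.le,
    mul_le_mul_of_nonneg_left e1.2 hε0.le, mul_le_mul_of_nonneg_left e2.1 hε0.le,
    mul_le_mul_of_nonneg_left e2.2 hε0.le, mul_le_mul_of_nonneg_left e3.1 hs.le,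
    mul_le_mul_of_nonneg_left e3.2 hs.le, mul_le_mul_of_nonneg_left e2.1 hs.le,
    mul_le_mul_of_nonneg_left e2.2 hs.le]

lemma iInf_diff_le {H : Type*} [Nonempty H] (F G : H → ℝ) (hF : ∀ f, 0 ≤ F f)
    (hG : ∀ f, 0 ≤ G f) (δ : ℝ) (hd : ∀ f, |F f - G f| ≤ δ) :
    |(⨅ f, F f) - ⨅ f, G f| ≤ δ := by
  have bF : BddBelow (Set.range F) := ⟨0, by rintro _ ⟨f, rfl⟩; exact hF f⟩
  have bG : BddBelow (Set.range G) := ⟨0, by rintro _ ⟨f, rfl⟩; exact hG f⟩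
  have h1 : (⨅ f, F f) - δ ≤ ⨅ f, G f := le_ciInf fun f => by
    have := ciInf_le bF f
    have := (abs_le.1 (hd f)).2
    linarith
  have h2 : (⨅ f, G f) - δ ≤ ⨅ f, F f := le_ciInf fun f => by
    have := ciInf_le bG f
    have := (abs_le.1 (hd f)).1
    linarith
  rw [abs_le]; constructor <;> linarith

/-- **Bounds for the bias over contamination neighborhoods.** If the pairwise loss `L` is
bounded by `c` and `H` is the RKHS of a bounded measurable kernel, then for every probability
measure `P`, every contaminating probability measure `P̄`, and every `ε ∈ (0,1)`, the
contaminated measure `P_ε = (1-ε)P + εP̄` satisfies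
`|R^reg(P_ε) - R^reg(P)| ≤ 2c d_TV(P̄, P) ε (1+ε) ≤ 2c ε (1+ε)`. -/
theorem rpl_bias_bound_contamination
    {X : Type*} [MeasurableSpace X] {Y : Set ℝ} (hY : IsClosed Y)
    (L : X → Y → X → Y → ℝ → ℝ → ℝ)
    (hL_nonneg : ∀ x y x' y' t t', 0 ≤ L x y x' y' t t')
    (hL_meas : Measurable fun p : (X × Y) × (X × Y) × ℝ × ℝ =>
      L p.1.1 p.1.2 p.2.1.1 p.2.1.2 p.2.2.1 p.2.2.2)
    (c : ℝ) (hc : 0 < c)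
    (hLbd : ∀ x y x' y' t t', L x y x' y' t t' ≤ c)
    {H : Type*} [NormedAddCommGroup H] [InnerProductSpace ℝ H] [CompleteSpace H]
    (Φ : X → H) (κ : ℝ) (hκ : ∀ x, ‖Φ x‖ ≤ κ)
    (hΦmeas : ∀ f : H, Measurable fun x => ⟪f, Φ x⟫)
    (l : ℝ) (hl : 0 < l)
    (P Pbar : Measure (X × Y)) (hP : IsProbabilityMeasure P)
    (hPbar : IsProbabilityMeasure Pbar)
    (ε : ℝ) (hε0 : 0 < ε) (hε1 : ε < 1) :
    |regRisk L Φ l (ENNReal.ofReal (1 - ε) • P + ENNReal.ofReal ε • Pbar)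
        - regRisk L Φ l P|
      ≤ 2 * c * distTV Pbar P * (ε * (1 + ε)) ∧
    |regRisk L Φ l (ENNReal.ofReal (1 - ε) • P + ENNReal.ofReal ε • Pbar)
        - regRisk L Φ l P|
      ≤ 2 * c * (ε * (1 + ε)) := by
  have main : |regRisk L Φ l (ENNReal.ofReal (1 - ε) • P + ENNReal.ofReal ε • Pbar)
        - regRisk L Φ l P| ≤ 2 * c * distTV Pbar P * (ε * (1 + ε)) := by
    unfold regRisk
    refine iInf_diff_le _ _ (fun f => ?_) (fun f => ?_) _ (fun f => ?_)
    · exact add_nonneg (integral_nonneg fun _ => hL_nonneg _ _ _ _ _ _) (by positivity)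
    · exact add_nonneg (integral_nonneg fun _ => hL_nonneg _ _ _ _ _ _) (by positivity)
    · rw [add_sub_add_right_eq_sub]
      have hf := hΦmeas f
      have hm : Measurable fun z : (X × Y) × (X × Y) =>
          L z.1.1 z.1.2 z.2.1 z.2.2 ⟪f, Φ z.1.1⟫ ⟪f, Φ z.2.1⟫ :=
        hL_meas.comp (measurable_fst.prodMk (measurable_snd.prodMk
          ((hf.comp (measurable_fst.comp measurable_fst)).prodMk
            (hf.comp (measurable_fst.comp measurable_snd)))))
      exact contam_le P Pbar _ hm c hc (fun _ => hL_nonneg _ _ _ _ _ _)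
        (fun _ => hLbd _ _ _ _ _ _) ε hε0 hε1
  refine ⟨main, main.trans ?_⟩
  have h1 := distTV_le_one Pbar P
  have h2 : 0 ≤ 2 * c * (ε * (1 + ε)) := by positivity
  nlinarith [mul_le_mul_of_nonneg_left h1 h2]
end
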